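/- Let P be a (non-unital) categorified non-symmetric operad, let S = {S_n}_{n≥1} be a family of sets, and let ρ_n : S_n → obj(P(n)) be functions. Let 𝒮 be the syntactic family of categories freely generated by S under the formal partial compositions ∘ᵢ and the formal arrows β, β⁻¹, θ, θ⁻¹ and their whiskerings, and let [−] : 𝒮 → P be the evaluation induced by ρ. Then for any two parallel morphisms φ₁, φ₂ : t₁ → t₂ in 𝒮, one has [φ₁] = [φ₂] in P. -/

import Mathlib

namespace Stmt11

open CategoryTheory

universe u v

/-- A (non-unital) categorified non-symmetric operad: a family of categories `P n`
(for `n ≥ 1`; the value at `0` is irrelevant since compositions require arity `≥ 1`),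
with partial composition bifunctors `∘ᵢ : P m × P k ⥤ P (m + k - 1)` for `1 ≤ i ≤ m`
(given here with an explicit equation `m + k - 1 = n` specifying the target arity, and
explicit — automatically satisfied — index bounds, so that the coherence diagrams can be
stated without casts), natural isomorphisms `β` (sequential associativity) and `θ`
(parallel associativity/commutativity) as in Definition 2.1, satisfying the three
pentagonal and two hexagonal coherence identities of Definition 2.1.  All indices are
`1`-based, as in the paper. -/
structure CategorifiedNsOperad : Type (max (u + 1) (v + 1)) where
  /-- the category of `n`-ary operations -/
  P : ℕ → Type u
  [str : ∀ n, Category.{v} (P n)]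
  /-- the partial composition `x ∘ᵢ y` (with `1`-based index `1 ≤ i ≤ m`) -/
  comp : ∀ {m k n : ℕ} (i : ℕ), 1 ≤ i → i ≤ m → 1 ≤ k → m + k - 1 = n → P m → P k → P n
  /-- the action of `∘ᵢ` on morphisms (making it a bifunctor) -/
  compMap : ∀ {m k n : ℕ} (i : ℕ) (hi1 : 1 ≤ i) (hi2 : i ≤ m) (hk : 1 ≤ k)
      (h : m + k - 1 = n) {a a' : P m} {b b' : P k},
      (a ⟶ a') → (b ⟶ b') → (comp i hi1 hi2 hk h a b ⟶ comp i hi1 hi2 hk h a' b')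
  compMap_id : ∀ {m k n : ℕ} (i : ℕ) (hi1 : 1 ≤ i) (hi2 : i ≤ m) (hk : 1 ≤ k)
      (h : m + k - 1 = n) (a : P m) (b : P k),
      compMap i hi1 hi2 hk h (𝟙 a) (𝟙 b) = 𝟙 (comp i hi1 hi2 hk h a b)
  compMap_comp : ∀ {m k n : ℕ} (i : ℕ) (hi1 : 1 ≤ i) (hi2 : i ≤ m) (hk : 1 ≤ k)
      (h : m + k - 1 = n) {a a' a'' : P m} {b b' b'' : P k}
      (f : a ⟶ a') (f' : a' ⟶ a'') (g : b ⟶ b') (g' : b' ⟶ b''),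
      compMap i hi1 hi2 hk h (f ≫ f') (g ≫ g') =
        compMap i hi1 hi2 hk h f g ≫ compMap i hi1 hi2 hk h f' g'
  /-- the sequential associativity isomorphism
  `β : (κ ∘ᵢ μ) ∘_{i+j-1} ν ≅ κ ∘ᵢ (μ ∘ⱼ ν)` -/
  assoc : ∀ {m n k A B N : ℕ} (i j I : ℕ)
      (hi1 : 1 ≤ i) (hi2 : i ≤ m) (hj1 : 1 ≤ j) (hj2 : j ≤ n) (hn : 1 ≤ n) (hk : 1 ≤ k)
      (hA : m + n - 1 = A) (hB : n + k - 1 = B) (hI : I = i + j - 1)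
      (hI1 : 1 ≤ I) (hI2 : I ≤ A) (hB1 : 1 ≤ B)
      (h1 : A + k - 1 = N) (h2 : m + B - 1 = N) (κ : P m) (μ : P n) (ν : P k),
      comp I hI1 hI2 hk h1 (comp i hi1 hi2 hn hA κ μ) ν ≅
        comp i hi1 hi2 hB1 h2 κ (comp j hj1 hj2 hk hB μ ν)
  /-- naturality of `β` in all three variables -/
  assoc_natural : ∀ {m n k A B N : ℕ} (i j I : ℕ)
      (hi1 : 1 ≤ i) (hi2 : i ≤ m) (hj1 : 1 ≤ j) (hj2 : j ≤ n) (hn : 1 ≤ n) (hk : 1 ≤ k)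
      (hA : m + n - 1 = A) (hB : n + k - 1 = B) (hI : I = i + j - 1)
      (hI1 : 1 ≤ I) (hI2 : I ≤ A) (hB1 : 1 ≤ B)
      (h1 : A + k - 1 = N) (h2 : m + B - 1 = N)
      {κ κ' : P m} {μ μ' : P n} {ν ν' : P k}
      (f : κ ⟶ κ') (g : μ ⟶ μ') (e : ν ⟶ ν'),
      compMap I hI1 hI2 hk h1 (compMap i hi1 hi2 hn hA f g) e ≫
          (assoc i j I hi1 hi2 hj1 hj2 hn hk hA hB hI hI1 hI2 hB1 h1 h2 κ' μ' ν').hom =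
        (assoc i j I hi1 hi2 hj1 hj2 hn hk hA hB hI hI1 hI2 hB1 h1 h2 κ μ ν).hom ≫
          compMap i hi1 hi2 hB1 h2 f (compMap j hj1 hj2 hk hB g e)
  /-- the parallel associativity isomorphism
  `θ : (κ ∘ᵢ y) ∘_{j+p-1} z ≅ (κ ∘ⱼ z) ∘ᵢ y` for `i < j` (where `y` has arity `p` and `z`
  has arity `q`) -/
  tw : ∀ {m p q c d N : ℕ} (i j J : ℕ)
      (hij : i < j) (hi1 : 1 ≤ i) (hi2 : i ≤ m) (hj1 : 1 ≤ j) (hj2 : j ≤ m)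
      (hp : 1 ≤ p) (hq : 1 ≤ q) (hC : m + p - 1 = c) (hD : m + q - 1 = d)
      (hJ : J = j + p - 1) (hJ1 : 1 ≤ J) (hJ2 : J ≤ c) (hid : i ≤ d)
      (h1 : c + q - 1 = N) (h2 : d + p - 1 = N) (κ : P m) (y : P p) (z : P q),
      comp J hJ1 hJ2 hq h1 (comp i hi1 hi2 hp hC κ y) z ≅
        comp i hi1 hid hp h2 (comp j hj1 hj2 hq hD κ z) y
  /-- naturality of `θ` in all three variables -/
  tw_natural : ∀ {m p q c d N : ℕ} (i j J : ℕ)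
      (hij : i < j) (hi1 : 1 ≤ i) (hi2 : i ≤ m) (hj1 : 1 ≤ j) (hj2 : j ≤ m)
      (hp : 1 ≤ p) (hq : 1 ≤ q) (hC : m + p - 1 = c) (hD : m + q - 1 = d)
      (hJ : J = j + p - 1) (hJ1 : 1 ≤ J) (hJ2 : J ≤ c) (hid : i ≤ d)
      (h1 : c + q - 1 = N) (h2 : d + p - 1 = N)
      {κ κ' : P m} {y y' : P p} {z z' : P q}
      (f : κ ⟶ κ') (g : y ⟶ y') (e : z ⟶ z'),
      compMap J hJ1 hJ2 hq h1 (compMap i hi1 hi2 hp hC f g) e ≫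
          (tw i j J hij hi1 hi2 hj1 hj2 hp hq hC hD hJ hJ1 hJ2 hid h1 h2 κ' y' z').hom =
        (tw i j J hij hi1 hi2 hj1 hj2 hp hq hC hD hJ hJ1 hJ2 hid h1 h2 κ y z).hom ≫
          compMap i hi1 hid hp h2 (compMap j hj1 hj2 hq hD f e) g
  /-- the first pentagonal identity (all compositions sequential):
  `(β ∘ 1) ≫ β ≫ (1 ∘ β) = β ≫ β` on `((κ ∘ᵢ τ) ∘ μ) ∘ ν`, with `τ` grafted at `i` in
  `κ`, `μ` grafted at `j` in `τ` and `ν` grafted at `l` in `μ` -/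
  pentagon_seq : ∀ {a b c d e f g p E2 N : ℕ} (i j l M L J2 : ℕ)
      (hi1 : 1 ≤ i) (hi2 : i ≤ a) (hj1 : 1 ≤ j) (hj2 : j ≤ b) (hl1 : 1 ≤ l) (hl2 : l ≤ c)
      (hb : 1 ≤ b) (hc : 1 ≤ c) (hd : 1 ≤ d)
      (he : a + b - 1 = e) (hf : b + c - 1 = f) (hg : c + d - 1 = g)
      (hp1 : f + d - 1 = p) (hp2 : b + g - 1 = p)
      (hE1 : e + c - 1 = E2) (hE2 : a + f - 1 = E2)
      (hM : M = i + j - 1) (hL : L = M + l - 1) (hLiJ : L = i + J2 - 1)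
      (hJ2 : J2 = j + l - 1)
      (hM1 : 1 ≤ M) (hMe : M ≤ e) (hL1 : 1 ≤ L) (hLE : L ≤ E2)
      (hJ21 : 1 ≤ J2) (hJ2f : J2 ≤ f) (hf1 : 1 ≤ f) (hg1 : 1 ≤ g) (hpg : 1 ≤ p)
      (hN1 : E2 + d - 1 = N) (hN2 : e + g - 1 = N) (hN3 : a + p - 1 = N)
      (κ : P a) (τ : P b) (μ : P c) (ν : P d),
      compMap L hL1 hLE hd hN1
          (assoc i j M hi1 hi2 hj1 hj2 hb hc he hf hM hM1 hMe hf1 hE1 hE2 κ τ μ).hom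
          (𝟙 ν) ≫
        (assoc i J2 L hi1 hi2 hJ21 hJ2f hf1 hd hE2 hp1 hLiJ hL1 hLE hpg hN1 hN3
          κ (comp j hj1 hj2 hc hf τ μ) ν).hom ≫
        compMap i hi1 hi2 hpg hN3 (𝟙 κ)
          (assoc j l J2 hj1 hj2 hl1 hl2 hc hd hf hg hJ2 hJ21 hJ2f hg1 hp1 hp2 τ μ ν).hom =
      (assoc M l L hM1 hMe hl1 hl2 hc hd hE1 hg hL hL1 hLE hg1 hN1 hN2
          (comp i hi1 hi2 hb he κ τ) μ ν).hom ≫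
        (assoc i j M hi1 hi2 hj1 hj2 hb hg1 he hp2 hM hM1 hMe hpg hN2 hN3 κ τ
          (comp l hl1 hl2 hd hg μ ν)).hom
  /-- the second pentagonal identity:
  `θ ≫ (θ ∘ 1) ≫ β = (β ∘ 1) ≫ θ` on `((κ ∘ᵤ τ) ∘ μ) ∘ ν`, with `τ` grafted at `u` in
  `κ`, `μ` grafted at `j` in `τ` and `ν` grafted at `w` in `κ`, `u < w` -/
  pentagon_two : ∀ {a b c d e f G E2 E3 N : ℕ} (u j w M W1 L : ℕ)
      (huw : u < w) (hu1 : 1 ≤ u) (hu2 : u ≤ a) (hw1 : 1 ≤ w) (hw2 : w ≤ a)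
      (hj1 : 1 ≤ j) (hj2 : j ≤ b) (hb : 1 ≤ b) (hc : 1 ≤ c) (hd : 1 ≤ d)
      (he : a + b - 1 = e) (hf : b + c - 1 = f) (hG : a + d - 1 = G)
      (hE1 : e + c - 1 = E2) (hE2 : a + f - 1 = E2)
      (hE3 : e + d - 1 = E3) (hE3' : G + b - 1 = E3)
      (hM : M = u + j - 1) (hW1 : W1 = w + b - 1) (hL : L = W1 + c - 1)
      (hLwf : L = w + f - 1)
      (hM1 : 1 ≤ M) (hMe : M ≤ e) (hMW : M < W1) (hW11 : 1 ≤ W1) (hW1e : W1 ≤ e)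
      (hL1 : 1 ≤ L) (hLE2 : L ≤ E2) (hME3 : M ≤ E3) (huG : u ≤ G) (hf1 : 1 ≤ f)
      (hN1 : E2 + d - 1 = N) (hN2 : E3 + c - 1 = N) (hN3 : G + f - 1 = N)
      (κ : P a) (τ : P b) (μ : P c) (ν : P d),
      (tw M W1 L hMW hM1 hMe hW11 hW1e hc hd hE1 hE3 hL hL1 hLE2 hME3 hN1 hN2
          (comp u hu1 hu2 hb he κ τ) μ ν).hom ≫
        compMap M hM1 hME3 hc hN2
          (tw u w W1 huw hu1 hu2 hw1 hw2 hb hd he hG hW1 hW11 hW1e huG hE3 hE3'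
            κ τ ν).hom (𝟙 μ) ≫
        (assoc u j M hu1 huG hj1 hj2 hb hc hE3' hf hM hM1 hME3 hf1 hN2 hN3
          (comp w hw1 hw2 hd hG κ ν) τ μ).hom =
      compMap L hL1 hLE2 hd hN1
          (assoc u j M hu1 hu2 hj1 hj2 hb hc he hf hM hM1 hMe hf1 hE1 hE2 κ τ μ).hom
          (𝟙 ν) ≫
        (tw u w L huw hu1 hu2 hw1 hw2 hf1 hd hE2 hG hLwf hL1 hLE2 huG hN1 hN3 κ
          (comp j hj1 hj2 hc hf τ μ) ν).hom
  /-- the third pentagonal identity: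
  `(θ ∘ 1) ≫ θ ≫ (β ∘ 1) = β ≫ θ` on `((κ ∘ᵤ τ) ∘ μ) ∘ ν`, with `τ` grafted at `u` in
  `κ`, `μ` grafted at `w` in `κ`, `u < w`, and `ν` grafted at `l` in `μ` -/
  pentagon_three : ∀ {a b c d e G g E2 E3 N : ℕ} (u w l W1 V L : ℕ)
      (huw : u < w) (hu1 : 1 ≤ u) (hu2 : u ≤ a) (hw1 : 1 ≤ w) (hw2 : w ≤ a)
      (hl1 : 1 ≤ l) (hl2 : l ≤ c) (hb : 1 ≤ b) (hc : 1 ≤ c) (hd : 1 ≤ d)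
      (he : a + b - 1 = e) (hG : a + c - 1 = G) (hg : c + d - 1 = g)
      (hE1 : e + c - 1 = E2) (hE2 : G + b - 1 = E2)
      (hE3 : G + d - 1 = E3) (hE3' : a + g - 1 = E3)
      (hW1 : W1 = w + b - 1) (hV : V = w + l - 1) (hL : L = W1 + l - 1)
      (hLVb : L = V + b - 1)
      (hW11 : 1 ≤ W1) (hW1e : W1 ≤ e) (hL1 : 1 ≤ L) (hLE2 : L ≤ E2)
      (huV : u < V) (hV1 : 1 ≤ V) (hVG : V ≤ G) (huG : u ≤ G) (huE3 : u ≤ E3)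
      (hg1 : 1 ≤ g)
      (hN1 : E2 + d - 1 = N) (hN2 : E3 + b - 1 = N) (hN3 : e + g - 1 = N)
      (κ : P a) (τ : P b) (μ : P c) (ν : P d),
      compMap L hL1 hLE2 hd hN1
          (tw u w W1 huw hu1 hu2 hw1 hw2 hb hc he hG hW1 hW11 hW1e huG hE1 hE2
            κ τ μ).hom (𝟙 ν) ≫
        (tw u V L huV hu1 huG hV1 hVG hb hd hE2 hE3 hLVb hL1 hLE2 huE3 hN1 hN2
          (comp w hw1 hw2 hc hG κ μ) τ ν).hom ≫
        compMap u hu1 huE3 hb hN2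
          (assoc w l V hw1 hw2 hl1 hl2 hc hd hG hg hV hV1 hVG hg1 hE3 hE3' κ μ ν).hom
          (𝟙 τ) =
      (assoc W1 l L hW11 hW1e hl1 hl2 hc hd hE1 hg hL hL1 hLE2 hg1 hN1 hN3
          (comp u hu1 hu2 hb he κ τ) μ ν).hom ≫
        (tw u w W1 huw hu1 hu2 hw1 hw2 hb hg1 he hE3' hW1 hW11 hW1e huE3 hN3 hN2 κ τ
          (comp l hl1 hl2 hd hg μ ν)).hom
  /-- the first hexagonal identity:
  `θ ≫ (β ∘ 1) ≫ β = (β ∘ 1) ≫ β ≫ (1 ∘ θ)` on `((κ ∘ᵢ τ) ∘ μ) ∘ ν`, with `τ` grafted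
  at `i` in `κ` and `μ`, `ν` grafted at `p < q` in `τ` -/
  hexagon_one : ∀ {a b c d e f fv E2 E3 p2 N : ℕ} (i p q Pm Qn L Q2 : ℕ)
      (hpq : p < q) (hi1 : 1 ≤ i) (hi2 : i ≤ a) (hp1 : 1 ≤ p) (hpb : p ≤ b)
      (hq1 : 1 ≤ q) (hq2 : q ≤ b) (hb : 1 ≤ b) (hc : 1 ≤ c) (hd : 1 ≤ d)
      (he : a + b - 1 = e) (hf : b + c - 1 = f) (hfv : b + d - 1 = fv)
      (hE21 : e + c - 1 = E2) (hE22 : a + f - 1 = E2)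
      (hE31 : e + d - 1 = E3) (hE32 : a + fv - 1 = E3)
      (hp21 : f + d - 1 = p2) (hp22 : fv + c - 1 = p2)
      (hPm : Pm = i + p - 1) (hQn : Qn = i + q - 1) (hL : L = Qn + c - 1)
      (hLiQ2 : L = i + Q2 - 1) (hQ2 : Q2 = q + c - 1)
      (hPm1 : 1 ≤ Pm) (hPme : Pm ≤ e) (hQn1 : 1 ≤ Qn) (hQne : Qn ≤ e) (hPQ : Pm < Qn)
      (hL1 : 1 ≤ L) (hLE2 : L ≤ E2) (hPmE3 : Pm ≤ E3) (hQ21 : 1 ≤ Q2) (hQ2f : Q2 ≤ f)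
      (hf1 : 1 ≤ f) (hfv1 : 1 ≤ fv) (hp2' : 1 ≤ p2) (hpfv : p ≤ fv)
      (hN1 : E2 + d - 1 = N) (hN2 : E3 + c - 1 = N) (hN3 : a + p2 - 1 = N)
      (κ : P a) (τ : P b) (μ : P c) (ν : P d),
      (tw Pm Qn L hPQ hPm1 hPme hQn1 hQne hc hd hE21 hE31 hL hL1 hLE2 hPmE3 hN1 hN2
          (comp i hi1 hi2 hb he κ τ) μ ν).hom ≫
        compMap Pm hPm1 hPmE3 hc hN2
          (assoc i q Qn hi1 hi2 hq1 hq2 hb hd he hfv hQn hQn1 hQne hfv1 hE31 hE32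
            κ τ ν).hom (𝟙 μ) ≫
        (assoc i p Pm hi1 hi2 hp1 hpfv hfv1 hc hE32 hp22 hPm hPm1 hPmE3 hp2' hN2 hN3 κ
          (comp q hq1 hq2 hd hfv τ ν) μ).hom =
      compMap L hL1 hLE2 hd hN1
          (assoc i p Pm hi1 hi2 hp1 hpb hb hc he hf hPm hPm1 hPme hf1 hE21 hE22
            κ τ μ).hom (𝟙 ν) ≫
        (assoc i Q2 L hi1 hi2 hQ21 hQ2f hf1 hd hE22 hp21 hLiQ2 hL1 hLE2 hp2' hN1 hN3 κ
          (comp p hp1 hpb hc hf τ μ) ν).hom ≫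
        compMap i hi1 hi2 hp2' hN3 (𝟙 κ)
          (tw p q Q2 hpq hp1 hpb hq1 hq2 hc hd hf hfv hQ2 hQ21 hQ2f hpfv hp21 hp22
            τ μ ν).hom
  /-- the second hexagonal identity:
  `θ ≫ (θ ∘ 1) ≫ θ = (θ ∘ 1) ≫ θ ≫ (θ ∘ 1)` on `((κ ∘ᵤ τ) ∘ μ) ∘ ν`, with `τ`, `μ`,
  `ν` grafted at `u < v < w` in `κ` -/
  hexagon_two : ∀ {a b c d e Gm Gn E2 E3 E4 N : ℕ} (u v w V1 W1 W2 L : ℕ)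
      (huv : u < v) (hvw : v < w) (huw : u < w)
      (hu1 : 1 ≤ u) (hu2 : u ≤ a) (hv1 : 1 ≤ v) (hv2 : v ≤ a) (hw1 : 1 ≤ w) (hw2 : w ≤ a)
      (hb : 1 ≤ b) (hc : 1 ≤ c) (hd : 1 ≤ d)
      (he : a + b - 1 = e) (hGm : a + c - 1 = Gm) (hGn : a + d - 1 = Gn)
      (hE21 : e + c - 1 = E2) (hE22 : Gm + b - 1 = E2)
      (hE31 : e + d - 1 = E3) (hE32 : Gn + b - 1 = E3)
      (hE41 : Gm + d - 1 = E4) (hE42 : Gn + c - 1 = E4)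
      (hV1 : V1 = v + b - 1) (hW1 : W1 = w + b - 1) (hW2 : W2 = w + c - 1)
      (hL : L = W1 + c - 1) (hLW2 : L = W2 + b - 1)
      (hV11 : 1 ≤ V1) (hV1e : V1 ≤ e) (hW11 : 1 ≤ W1) (hW1e : W1 ≤ e) (hVW : V1 < W1)
      (hL1 : 1 ≤ L) (hLE2 : L ≤ E2) (hV1E3 : V1 ≤ E3) (huW2 : u < W2) (hW21 : 1 ≤ W2)
      (hW2Gm : W2 ≤ Gm) (huGm : u ≤ Gm) (huGn : u ≤ Gn) (huE4 : u ≤ E4) (hvGn : v ≤ Gn)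
      (hN1 : E2 + d - 1 = N) (hN2 : E3 + c - 1 = N) (hN3 : E4 + b - 1 = N)
      (κ : P a) (τ : P b) (μ : P c) (ν : P d),
      (tw V1 W1 L hVW hV11 hV1e hW11 hW1e hc hd hE21 hE31 hL hL1 hLE2 hV1E3 hN1 hN2
          (comp u hu1 hu2 hb he κ τ) μ ν).hom ≫
        compMap V1 hV11 hV1E3 hc hN2
          (tw u w W1 huw hu1 hu2 hw1 hw2 hb hd he hGn hW1 hW11 hW1e huGn hE31 hE32
            κ τ ν).hom (𝟙 μ) ≫
        (tw u v V1 huv hu1 huGn hv1 hvGn hb hc hE32 hE42 hV1 hV11 hV1E3 huE4 hN2 hN3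
          (comp w hw1 hw2 hd hGn κ ν) τ μ).hom =
      compMap L hL1 hLE2 hd hN1
          (tw u v V1 huv hu1 hu2 hv1 hv2 hb hc he hGm hV1 hV11 hV1e huGm hE21 hE22
            κ τ μ).hom (𝟙 ν) ≫
        (tw u W2 L huW2 hu1 huGm hW21 hW2Gm hb hd hE22 hE41 hLW2 hL1 hLE2 huE4 hN1 hN3
          (comp v hv1 hv2 hc hGm κ μ) τ ν).hom ≫
        compMap u hu1 huE4 hb hN3
          (tw v w W2 hvw hv1 hv2 hw1 hw2 hc hd hGm hGn hW2 hW21 hW2Gm hvGn hE41 hE42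
            κ μ ν).hom (𝟙 τ)

attribute [instance] CategorifiedNsOperad.str

/-- The objects of the free categorified non-symmetric operad `𝒮` on a family of sets
`S = {S n}_{n ≥ 1}`: formal iterated partial compositions (fully nested decorated planar
trees), graded by arity. -/
inductive FreeOb (S : ℕ → Type) : ℕ → Type
  | of {n : ℕ} (hn : 1 ≤ n) (s : S n) : FreeOb S n
  | graft {m k n : ℕ} (i : ℕ) (hi1 : 1 ≤ i) (hi2 : i ≤ m) (hk : 1 ≤ k)
      (h : m + k - 1 = n) : FreeOb S m → FreeOb S k → FreeOb S n

/-- The generating morphisms of the free categorified non-symmetric operad `𝒮`: the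
formal arrows `β`, `β⁻¹`, `θ`, `θ⁻¹` and their whiskerings `φ ∘ᵢ id` and `id ∘ⱼ φ`. -/
inductive FreeHom (S : ℕ → Type) : ∀ {n : ℕ}, FreeOb S n → FreeOb S n → Type
  | beta {m n k A B N : ℕ} (i j I : ℕ)
      (hi1 : 1 ≤ i) (hi2 : i ≤ m) (hj1 : 1 ≤ j) (hj2 : j ≤ n) (hn : 1 ≤ n) (hk : 1 ≤ k)
      (hA : m + n - 1 = A) (hB : n + k - 1 = B) (hI : I = i + j - 1)
      (hI1 : 1 ≤ I) (hI2 : I ≤ A) (hB1 : 1 ≤ B)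
      (h1 : A + k - 1 = N) (h2 : m + B - 1 = N)
      (κ : FreeOb S m) (μ : FreeOb S n) (ν : FreeOb S k) :
      FreeHom S (.graft I hI1 hI2 hk h1 (.graft i hi1 hi2 hn hA κ μ) ν)
        (.graft i hi1 hi2 hB1 h2 κ (.graft j hj1 hj2 hk hB μ ν))
  | betaInv {m n k A B N : ℕ} (i j I : ℕ)
      (hi1 : 1 ≤ i) (hi2 : i ≤ m) (hj1 : 1 ≤ j) (hj2 : j ≤ n) (hn : 1 ≤ n) (hk : 1 ≤ k)
      (hA : m + n - 1 = A) (hB : n + k - 1 = B) (hI : I = i + j - 1)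
      (hI1 : 1 ≤ I) (hI2 : I ≤ A) (hB1 : 1 ≤ B)
      (h1 : A + k - 1 = N) (h2 : m + B - 1 = N)
      (κ : FreeOb S m) (μ : FreeOb S n) (ν : FreeOb S k) :
      FreeHom S (.graft i hi1 hi2 hB1 h2 κ (.graft j hj1 hj2 hk hB μ ν))
        (.graft I hI1 hI2 hk h1 (.graft i hi1 hi2 hn hA κ μ) ν)
  | theta {m p q c d N : ℕ} (i j J : ℕ)
      (hij : i < j) (hi1 : 1 ≤ i) (hi2 : i ≤ m) (hj1 : 1 ≤ j) (hj2 : j ≤ m)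
      (hp : 1 ≤ p) (hq : 1 ≤ q) (hC : m + p - 1 = c) (hD : m + q - 1 = d)
      (hJ : J = j + p - 1) (hJ1 : 1 ≤ J) (hJ2 : J ≤ c) (hid : i ≤ d)
      (h1 : c + q - 1 = N) (h2 : d + p - 1 = N)
      (κ : FreeOb S m) (y : FreeOb S p) (z : FreeOb S q) :
      FreeHom S (.graft J hJ1 hJ2 hq h1 (.graft i hi1 hi2 hp hC κ y) z)
        (.graft i hi1 hid hp h2 (.graft j hj1 hj2 hq hD κ z) y)
  | thetaInv {m p q c d N : ℕ} (i j J : ℕ)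
      (hij : i < j) (hi1 : 1 ≤ i) (hi2 : i ≤ m) (hj1 : 1 ≤ j) (hj2 : j ≤ m)
      (hp : 1 ≤ p) (hq : 1 ≤ q) (hC : m + p - 1 = c) (hD : m + q - 1 = d)
      (hJ : J = j + p - 1) (hJ1 : 1 ≤ J) (hJ2 : J ≤ c) (hid : i ≤ d)
      (h1 : c + q - 1 = N) (h2 : d + p - 1 = N)
      (κ : FreeOb S m) (y : FreeOb S p) (z : FreeOb S q) :
      FreeHom S (.graft i hi1 hid hp h2 (.graft j hj1 hj2 hq hD κ z) y)
        (.graft J hJ1 hJ2 hq h1 (.graft i hi1 hi2 hp hC κ y) z)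
  | whiskerL {m k n : ℕ} (i : ℕ) (hi1 : 1 ≤ i) (hi2 : i ≤ m) (hk : 1 ≤ k)
      (h : m + k - 1 = n) (t : FreeOb S m) {x y : FreeOb S k} (f : FreeHom S x y) :
      FreeHom S (.graft i hi1 hi2 hk h t x) (.graft i hi1 hi2 hk h t y)
  | whiskerR {m k n : ℕ} (i : ℕ) (hi1 : 1 ≤ i) (hi2 : i ≤ m) (hk : 1 ≤ k)
      (h : m + k - 1 = n) {x y : FreeOb S m} (f : FreeHom S x y) (t : FreeOb S k) :
      FreeHom S (.graft i hi1 hi2 hk h x t) (.graft i hi1 hi2 hk h y t)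

/-- The quiver of formal expressions of arity `n` and generating morphisms; the free
category of paths on it is the `n`-th category `𝒮 n` of the free categorified
non-symmetric operad on `S`. -/
instance (S : ℕ → Type) (n : ℕ) : Quiver (FreeOb S n) := ⟨fun x y => FreeHom S x y⟩

variable (O : CategorifiedNsOperad.{u, v}) (S : ℕ → Type) (ρ : ∀ n : ℕ, S n → O.P n)

/-- Evaluation of formal expressions in the categorified operad `O`, extending `ρ`. -/
def evalOb : ∀ {n : ℕ}, FreeOb S n → O.P n
  | _, .of _ s => ρ _ s
  | _, .graft i hi1 hi2 hk h x y => O.comp i hi1 hi2 hk h (evalOb x) (evalOb y)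

/-- Evaluation of the generating morphisms in the categorified operad `O`: formal `β` and
`θ` arrows are sent to the structure isomorphisms of `O`, and whiskerings to the action
of the composition bifunctors. -/
def evalHom : ∀ {n : ℕ} {x y : FreeOb S n}, FreeHom S x y → (evalOb O S ρ x ⟶ evalOb O S ρ y)
  | _, _, _, .beta i j I hi1 hi2 hj1 hj2 hn hk hA hB hI hI1 hI2 hB1 h1 h2 κ μ ν =>
      (O.assoc i j I hi1 hi2 hj1 hj2 hn hk hA hB hI hI1 hI2 hB1 h1 h2
        (evalOb O S ρ κ) (evalOb O S ρ μ) (evalOb O S ρ ν)).hom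
  | _, _, _, .betaInv i j I hi1 hi2 hj1 hj2 hn hk hA hB hI hI1 hI2 hB1 h1 h2 κ μ ν =>
      (O.assoc i j I hi1 hi2 hj1 hj2 hn hk hA hB hI hI1 hI2 hB1 h1 h2
        (evalOb O S ρ κ) (evalOb O S ρ μ) (evalOb O S ρ ν)).inv
  | _, _, _, .theta i j J hij hi1 hi2 hj1 hj2 hp hq hC hD hJ hJ1 hJ2 hid h1 h2 κ y z =>
      (O.tw i j J hij hi1 hi2 hj1 hj2 hp hq hC hD hJ hJ1 hJ2 hid h1 h2
        (evalOb O S ρ κ) (evalOb O S ρ y) (evalOb O S ρ z)).hom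
  | _, _, _, .thetaInv i j J hij hi1 hi2 hj1 hj2 hp hq hC hD hJ hJ1 hJ2 hid h1 h2 κ y z =>
      (O.tw i j J hij hi1 hi2 hj1 hj2 hp hq hC hD hJ hJ1 hJ2 hid h1 h2
        (evalOb O S ρ κ) (evalOb O S ρ y) (evalOb O S ρ z)).inv
  | _, _, _, .whiskerL i hi1 hi2 hk h t f =>
      O.compMap i hi1 hi2 hk h (𝟙 (evalOb O S ρ t)) (evalHom f)
  | _, _, _, .whiskerR i hi1 hi2 hk h f t =>
      O.compMap i hi1 hi2 hk h (evalHom f) (𝟙 (evalOb O S ρ t))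

/-- The evaluation prefunctor from the quiver of formal expressions of arity `n` to the
category `O.P n`. -/
def evalPrefunctor (n : ℕ) : Prefunctor (FreeOb S n) (O.P n) where
  obj := evalOb O S ρ
  map := evalHom O S ρ

/-- The evaluation functor `[-] : 𝒮 n ⥤ O.P n`, i.e. the `n`-th component of the unique
strict morphism of categorified non-symmetric operads from the free one on `S` to `O`
extending `ρ`, precomposed with the quotient map `𝒮 → F(S)`. -/
def eval (n : ℕ) : Paths (FreeOb S n) ⥤ O.P n :=
  Paths.lift (evalPrefunctor O S ρ n)

/-! ### Proof of coherence

We orient `β` and `θ` as rewriting rules.  The resulting system terminates and its critical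
pairs are exactly the pentagons and hexagons, so that a Newman style argument applies. -/

/-- Forward rewriting steps. -/
inductive Step (S : ℕ → Type) : ∀ {n : ℕ}, FreeOb S n → FreeOb S n → Type
  | beta {m n k A B N : ℕ} (i j I : ℕ) (κ : FreeOb S m) (μ : FreeOb S n) (ν : FreeOb S k)
      (hi1 : 1 ≤ i := by omega) (hi2 : i ≤ m := by omega) (hj1 : 1 ≤ j := by omega)
      (hj2 : j ≤ n := by omega) (hn : 1 ≤ n := by omega) (hk : 1 ≤ k := by omega)
      (hA : m + n - 1 = A := by omega) (hB : n + k - 1 = B := by omega)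
      (hI : I = i + j - 1 := by omega)
      (hI1 : 1 ≤ I := by omega) (hI2 : I ≤ A := by omega) (hB1 : 1 ≤ B := by omega)
      (h1 : A + k - 1 = N := by omega) (h2 : m + B - 1 = N := by omega) :
      Step S (.graft I hI1 hI2 hk h1 (.graft i hi1 hi2 hn hA κ μ) ν)
        (.graft i hi1 hi2 hB1 h2 κ (.graft j hj1 hj2 hk hB μ ν))
  | theta {m p q c d N : ℕ} (i j J : ℕ) (κ : FreeOb S m) (y : FreeOb S p) (z : FreeOb S q)
      (hij : i < j := by omega) (hi1 : 1 ≤ i := by omega) (hi2 : i ≤ m := by omega)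
      (hj1 : 1 ≤ j := by omega) (hj2 : j ≤ m := by omega)
      (hp : 1 ≤ p := by omega) (hq : 1 ≤ q := by omega) (hC : m + p - 1 = c := by omega)
      (hD : m + q - 1 = d := by omega)
      (hJ : J = j + p - 1 := by omega) (hJ1 : 1 ≤ J := by omega) (hJ2 : J ≤ c := by omega)
      (hid : i ≤ d := by omega)
      (h1 : c + q - 1 = N := by omega) (h2 : d + p - 1 = N := by omega) :
      Step S (.graft J hJ1 hJ2 hq h1 (.graft i hi1 hi2 hp hC κ y) z)
        (.graft i hi1 hid hp h2 (.graft j hj1 hj2 hq hD κ z) y)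
  | whiskerL {m k n : ℕ} (i : ℕ) (t : FreeOb S m) {x y : FreeOb S k} (f : Step S x y)
      (hi1 : 1 ≤ i := by omega) (hi2 : i ≤ m := by omega) (hk : 1 ≤ k := by omega)
      (h : m + k - 1 = n := by omega) :
      Step S (.graft i hi1 hi2 hk h t x) (.graft i hi1 hi2 hk h t y)
  | whiskerR {m k n : ℕ} (i : ℕ) {x y : FreeOb S m} (f : Step S x y) (t : FreeOb S k)
      (hi1 : 1 ≤ i := by omega) (hi2 : i ≤ m := by omega) (hk : 1 ≤ k := by omega)
      (h : m + k - 1 = n := by omega) :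
      Step S (.graft i hi1 hi2 hk h x t) (.graft i hi1 hi2 hk h y t)

/-- Evaluation of forward steps. -/
def ev : ∀ {n : ℕ} {x y : FreeOb S n}, Step S x y → (evalOb O S ρ x ⟶ evalOb O S ρ y)
  | _, _, _, .beta i j I κ μ ν hi1 hi2 hj1 hj2 hn hk hA hB hI hI1 hI2 hB1 h1 h2 =>
      (O.assoc i j I hi1 hi2 hj1 hj2 hn hk hA hB hI hI1 hI2 hB1 h1 h2
        (evalOb O S ρ κ) (evalOb O S ρ μ) (evalOb O S ρ ν)).hom
  | _, _, _, .theta i j J κ y z hij hi1 hi2 hj1 hj2 hp hq hC hD hJ hJ1 hJ2 hid h1 h2 =>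
      (O.tw i j J hij hi1 hi2 hj1 hj2 hp hq hC hD hJ hJ1 hJ2 hid h1 h2
        (evalOb O S ρ κ) (evalOb O S ρ y) (evalOb O S ρ z)).hom
  | _, _, _, .whiskerL i t f hi1 hi2 hk h =>
      O.compMap i hi1 hi2 hk h (𝟙 (evalOb O S ρ t)) (ev f)
  | _, _, _, .whiskerR i f t hi1 hi2 hk h =>
      O.compMap i hi1 hi2 hk h (ev f) (𝟙 (evalOb O S ρ t))

/-- Iterated forward reductions together with their value. -/
inductive Red : ∀ {n : ℕ} (x y : FreeOb S n), (evalOb O S ρ x ⟶ evalOb O S ρ y) → Prop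
  | refl {n : ℕ} (x : FreeOb S n) : Red x x (𝟙 _)
  | step {n : ℕ} {x y z : FreeOb S n} (s : Step S x y) {f : evalOb O S ρ y ⟶ evalOb O S ρ z}
      (r : Red y z f) : Red x z (ev O S ρ s ≫ f)

variable {O S ρ}

theorem compMap_square {m k n : ℕ} (i : ℕ) (hi1 : 1 ≤ i) (hi2 : i ≤ m) (hk : 1 ≤ k)
    (h : m + k - 1 = n) {a a' : O.P m} {b b' : O.P k} (f : a ⟶ a') (g : b ⟶ b') :
    O.compMap i hi1 hi2 hk h (𝟙 a) g ≫ O.compMap i hi1 hi2 hk h f (𝟙 b') =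
      O.compMap i hi1 hi2 hk h f (𝟙 b) ≫ O.compMap i hi1 hi2 hk h (𝟙 a') g := by
  rw [← O.compMap_comp, ← O.compMap_comp]
  simp

theorem compMap_left {m k n : ℕ} (i : ℕ) (hi1 : 1 ≤ i) (hi2 : i ≤ m) (hk : 1 ≤ k)
    (h : m + k - 1 = n) (a : O.P m) {b b' b'' : O.P k} (f : b ⟶ b') (g : b' ⟶ b'') :
    O.compMap i hi1 hi2 hk h (𝟙 a) f ≫ O.compMap i hi1 hi2 hk h (𝟙 a) g =
      O.compMap i hi1 hi2 hk h (𝟙 a) (f ≫ g) := by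
  rw [← O.compMap_comp, Category.comp_id]

theorem compMap_right {m k n : ℕ} (i : ℕ) (hi1 : 1 ≤ i) (hi2 : i ≤ m) (hk : 1 ≤ k)
    (h : m + k - 1 = n) {a a' a'' : O.P m} (b : O.P k) (f : a ⟶ a') (g : a' ⟶ a'') :
    O.compMap i hi1 hi2 hk h f (𝟙 b) ≫ O.compMap i hi1 hi2 hk h g (𝟙 b) =
      O.compMap i hi1 hi2 hk h (f ≫ g) (𝟙 b) := by
  rw [← O.compMap_comp, Category.comp_id]

theorem compMap_left_id {m k n : ℕ} (i : ℕ) (hi1 : 1 ≤ i) (hi2 : i ≤ m) (hk : 1 ≤ k)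
    (h : m + k - 1 = n) (a : O.P m) {b b' : O.P k} (f : b ⟶ b') (g : b' ⟶ b)
    (e : f ≫ g = 𝟙 b) :
    O.compMap i hi1 hi2 hk h (𝟙 a) f ≫ O.compMap i hi1 hi2 hk h (𝟙 a) g = 𝟙 _ := by
  rw [compMap_left, e, O.compMap_id]

theorem compMap_right_id {m k n : ℕ} (i : ℕ) (hi1 : 1 ≤ i) (hi2 : i ≤ m) (hk : 1 ≤ k)
    (h : m + k - 1 = n) {a a' : O.P m} (b : O.P k) (f : a ⟶ a') (g : a' ⟶ a)
    (e : f ≫ g = 𝟙 a) :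
    O.compMap i hi1 hi2 hk h f (𝟙 b) ≫ O.compMap i hi1 hi2 hk h g (𝟙 b) = 𝟙 _ := by
  rw [compMap_right, e, O.compMap_id]

theorem Red.one {n : ℕ} {x y : FreeOb S n} (s : Step S x y) : Red O S ρ x y (ev O S ρ s) := by
  have := Red.step s (Red.refl (O := O) (ρ := ρ) y)
  rwa [Category.comp_id] at this

theorem Red.congr {n : ℕ} {x y : FreeOb S n} {f g : evalOb O S ρ x ⟶ evalOb O S ρ y}
    (r : Red O S ρ x y f) (e : f = g) : Red O S ρ x y g := e ▸ r

theorem Red.trans {n : ℕ} {x y z : FreeOb S n} {f : evalOb O S ρ x ⟶ evalOb O S ρ y}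
    {g : evalOb O S ρ y ⟶ evalOb O S ρ z} (r : Red O S ρ x y f) (r' : Red O S ρ y z g) :
    Red O S ρ x z (f ≫ g) := by
  induction r with
  | refl x => rwa [Category.id_comp]
  | step s r ih => rw [Category.assoc]; exact Red.step s (ih r')

theorem Red.whiskerL {m k n : ℕ} (i : ℕ) (hi1 : 1 ≤ i) (hi2 : i ≤ m) (hk : 1 ≤ k)
    (h : m + k - 1 = n) (t : FreeOb S m) {x y : FreeOb S k}
    {f : evalOb O S ρ x ⟶ evalOb O S ρ y} (r : Red O S ρ x y f) :
    Red O S ρ (.graft i hi1 hi2 hk h t x) (.graft i hi1 hi2 hk h t y)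
      (O.compMap i hi1 hi2 hk h (𝟙 (evalOb O S ρ t)) f) := by
  induction r with
  | refl x => rw [O.compMap_id]; exact Red.refl _
  | step s r ih =>
    rw [← Category.comp_id (𝟙 (evalOb O S ρ t)), O.compMap_comp]
    exact Red.step (Step.whiskerL i t s hi1 hi2 hk h) ih

theorem Red.whiskerR {m k n : ℕ} (i : ℕ) (hi1 : 1 ≤ i) (hi2 : i ≤ m) (hk : 1 ≤ k)
    (h : m + k - 1 = n) {x y : FreeOb S m}
    {f : evalOb O S ρ x ⟶ evalOb O S ρ y} (r : Red O S ρ x y f) (t : FreeOb S k) :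
    Red O S ρ (.graft i hi1 hi2 hk h x t) (.graft i hi1 hi2 hk h y t)
      (O.compMap i hi1 hi2 hk h f (𝟙 (evalOb O S ρ t))) := by
  induction r with
  | refl x => rw [O.compMap_id]; exact Red.refl _
  | step s r ih =>
    rw [← Category.comp_id (𝟙 (evalOb O S ρ t)), O.compMap_comp]
    exact Red.step (Step.whiskerR i s t hi1 hi2 hk h) ih

/-- Two morphisms out of `x` can be completed by reductions to a commutative square. -/
def Join {n : ℕ} {x a b : FreeOb S n} (f : evalOb O S ρ x ⟶ evalOb O S ρ a)
    (g : evalOb O S ρ x ⟶ evalOb O S ρ b) : Prop :=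
  ∃ (c : FreeOb S n) (f' : evalOb O S ρ a ⟶ evalOb O S ρ c)
    (g' : evalOb O S ρ b ⟶ evalOb O S ρ c),
    Red O S ρ a c f' ∧ Red O S ρ b c g' ∧ f ≫ f' = g ≫ g'

theorem Join.symm {n : ℕ} {x a b : FreeOb S n} {f : evalOb O S ρ x ⟶ evalOb O S ρ a}
    {g : evalOb O S ρ x ⟶ evalOb O S ρ b} (h : Join f g) : Join g f := by
  obtain ⟨c, f', g', r, r', e⟩ := h
  exact ⟨c, g', f', r', r, e.symm⟩

theorem Join.rfl' {n : ℕ} {x a : FreeOb S n} {f : evalOb O S ρ x ⟶ evalOb O S ρ a} :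
    Join f f := ⟨a, _, _, Red.refl _, Red.refl _, rfl⟩

theorem join_beta {m n k A B N : ℕ} (i j I : ℕ)
    (κ : FreeOb S m) (μ : FreeOb S n) (ν : FreeOb S k)
    (hi1 : 1 ≤ i) (hi2 : i ≤ m) (hj1 : 1 ≤ j) (hj2 : j ≤ n) (hn : 1 ≤ n) (hk : 1 ≤ k)
    (hA : m + n - 1 = A) (hB : n + k - 1 = B) (hI : I = i + j - 1)
    (hI1 : 1 ≤ I) (hI2 : I ≤ A) (hB1 : 1 ≤ B)
    (h1 : A + k - 1 = N) (h2 : m + B - 1 = N) {b : FreeOb S N}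
    (s : Step S (.graft I hI1 hI2 hk h1 (.graft i hi1 hi2 hn hA κ μ) ν) b) :
    Join (ev O S ρ (Step.beta i j I κ μ ν hi1 hi2 hj1 hj2 hn hk hA hB hI hI1 hI2 hB1 h1 h2))
      (ev O S ρ s) := by
  cases s with
  | beta _ j' _ _ _ _ _ _ _ _ _ _ _ hB' hI' =>
    obtain rfl : j = j' := by omega
    subst hB
    subst hB'
    exact Join.rfl'
  | theta => exfalso; omega
  | whiskerL _ _ f =>
    refine ⟨_, _, _, Red.one (Step.whiskerL i κ (Step.whiskerL j μ f hj1 hj2 hk hB) hi1 hi2 hB1 h2),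
      Red.one (Step.beta i j I κ μ _ hi1 hi2 hj1 hj2 hn hk hA hB hI hI1 hI2 hB1 h1 h2), ?_⟩
    have key := O.assoc_natural i j I hi1 hi2 hj1 hj2 hn hk hA hB hI hI1 hI2 hB1 h1 h2
      (𝟙 (evalOb O S ρ κ)) (𝟙 (evalOb O S ρ μ)) (ev O S ρ f)
    rw [O.compMap_id] at key
    exact key.symm
  | whiskerR _ f _ =>
    cases f with
    | whiskerL _ _ f =>
      refine ⟨_, _, _, Red.one (Step.whiskerL i κ (Step.whiskerR j f ν hj1 hj2 hk hB) hi1 hi2 hB1 h2),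
        Red.one (Step.beta i j I κ _ ν hi1 hi2 hj1 hj2 hn hk hA hB hI hI1 hI2 hB1 h1 h2), ?_⟩
      have key := O.assoc_natural i j I hi1 hi2 hj1 hj2 hn hk hA hB hI hI1 hI2 hB1 h1 h2
        (𝟙 (evalOb O S ρ κ)) (ev O S ρ f) (𝟙 (evalOb O S ρ ν))
      exact key.symm
    | whiskerR _ f _ =>
      refine ⟨_, _, _, Red.one (Step.whiskerR i f (.graft j hj1 hj2 hk hB μ ν) hi1 hi2 hB1 h2),
        Red.one (Step.beta i j I _ μ ν hi1 hi2 hj1 hj2 hn hk hA hB hI hI1 hI2 hB1 h1 h2), ?_⟩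
      have key := O.assoc_natural i j I hi1 hi2 hj1 hj2 hn hk hA hB hI hI1 hI2 hB1 h1 h2
        (ev O S ρ f) (𝟙 (evalOb O S ρ μ)) (𝟙 (evalOb O S ρ ν))
      rw [O.compMap_id] at key
      exact key.symm
    | @beta a bb _ _ f _ i' j' _ κ' τ' _ =>
      refine ⟨_, _, _, Red.one (Step.beta (B := f + k - 1) i' j' i κ' τ' (.graft j hj1 hj2 hk hB μ ν)),
        Red.step (Step.beta (B := f + k - 1) i' (j' + j - 1) I κ' (.graft j' (by omega) (by omega) (by omega) (by omega) τ' μ) ν)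
        (Red.one (Step.whiskerL i' κ' (Step.beta (B := B) j' j (j' + j - 1) τ' μ ν))), ?_⟩
      simp only [ev]
      symm
      apply O.pentagon_seq <;> omega
    | @theta a bb _ _ d _ i' j' _ κ' τ' _ =>
      refine ⟨_, _, _, Red.one (Step.theta (d := a + B - 1) i' j' i κ' τ' (.graft j hj1 hj2 hk hB μ ν)),
        Red.step (Step.theta (d := a + B - 1) i' (j' + j - 1) I (.graft j' (by omega) (by omega) (by omega) (by omega) κ' μ) τ' ν)
        (Red.one (Step.whiskerR i' (Step.beta (B := B) j' j (j' + j - 1) κ' μ ν) τ')), ?_⟩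
      simp only [ev]
      symm
      apply O.pentagon_three <;> omega

theorem join_theta {m p q c d N : ℕ} (i j J : ℕ)
    (κ : FreeOb S m) (y : FreeOb S p) (z : FreeOb S q)
    (hij : i < j) (hi1 : 1 ≤ i) (hi2 : i ≤ m) (hj1 : 1 ≤ j) (hj2 : j ≤ m)
    (hp : 1 ≤ p) (hq : 1 ≤ q) (hC : m + p - 1 = c) (hD : m + q - 1 = d)
    (hJ : J = j + p - 1) (hJ1 : 1 ≤ J) (hJ2 : J ≤ c) (hid : i ≤ d)
    (h1 : c + q - 1 = N) (h2 : d + p - 1 = N) {b : FreeOb S N}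
    (s : Step S (.graft J hJ1 hJ2 hq h1 (.graft i hi1 hi2 hp hC κ y) z) b) :
    Join (ev O S ρ (Step.theta i j J κ y z hij hi1 hi2 hj1 hj2 hp hq hC hD hJ hJ1 hJ2 hid h1 h2))
      (ev O S ρ s) := by
  cases s with
  | beta => exfalso; omega
  | theta _ j' _ _ _ _ _ _ _ _ _ _ _ _ hD' hJ' =>
    obtain rfl : j = j' := by omega
    subst hD
    subst hD'
    exact Join.rfl'
  | whiskerL _ _ f =>
    refine ⟨_, _, _, Red.one (Step.whiskerR i (Step.whiskerL j κ f hj1 hj2 hq hD) y hi1 hid hp h2),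
      Red.one (Step.theta i j J κ y _ hij hi1 hi2 hj1 hj2 hp hq hC hD hJ hJ1 hJ2 hid h1 h2), ?_⟩
    have key := O.tw_natural i j J hij hi1 hi2 hj1 hj2 hp hq hC hD hJ hJ1 hJ2 hid h1 h2
      (𝟙 (evalOb O S ρ κ)) (𝟙 (evalOb O S ρ y)) (ev O S ρ f)
    rw [O.compMap_id] at key
    exact key.symm
  | whiskerR _ f _ =>
    cases f with
    | whiskerL _ _ f =>
      refine ⟨_, _, _, Red.one (Step.whiskerL i (.graft j hj1 hj2 hq hD κ z) f hi1 hid hp h2),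
        Red.one (Step.theta i j J κ _ z hij hi1 hi2 hj1 hj2 hp hq hC hD hJ hJ1 hJ2 hid h1 h2), ?_⟩
      have key := O.tw_natural i j J hij hi1 hi2 hj1 hj2 hp hq hC hD hJ hJ1 hJ2 hid h1 h2
        (𝟙 (evalOb O S ρ κ)) (ev O S ρ f) (𝟙 (evalOb O S ρ z))
      rw [O.compMap_id j hj1 hj2 hq hD] at key
      exact key.symm
    | whiskerR _ f _ =>
      refine ⟨_, _, _, Red.one (Step.whiskerR i (Step.whiskerR j f z hj1 hj2 hq hD) y hi1 hid hp h2),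
        Red.one (Step.theta i j J _ y z hij hi1 hi2 hj1 hj2 hp hq hC hD hJ hJ1 hJ2 hid h1 h2), ?_⟩
      have key := O.tw_natural i j J hij hi1 hi2 hj1 hj2 hp hq hC hD hJ hJ1 hJ2 hid h1 h2
        (ev O S ρ f) (𝟙 (evalOb O S ρ y)) (𝟙 (evalOb O S ρ z))
      exact key.symm
    | @beta a bb _ _ f _ i' j' _ κ' τ' _ =>
      by_cases hc : j ≤ i' + bb - 1
      · -- first hexagon
        refine ⟨_, _, _,
          Red.step (Step.whiskerR i (Step.beta (B := bb + q - 1) i' (j - i' + 1) j κ' τ' z) y)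
          (Red.one (Step.beta (B := f + q - 1) i' j' i κ'
            (.graft (j - i' + 1) (by omega) (by omega) (by omega) (by omega) τ' z) y)),
          Red.step (Step.beta (B := f + q - 1) i' (j - i' + 1 + p - 1) J κ'
            (.graft j' (by omega) (by omega) (by omega) (by omega) τ' y) z)
          (Red.one (Step.whiskerL i' κ'
            (Step.theta (d := bb + q - 1) j' (j - i' + 1) (j - i' + 1 + p - 1) τ' y z))), ?_⟩
        simp only [ev]
        apply O.hexagon_one <;> omega
      · -- second pentagon
        refine ⟨_, _, _,
          Red.step (Step.whiskerR i (Step.theta (d := a + q - 1) i' (j - bb + 1) j κ' τ' z) y)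
          (Red.one (Step.beta (B := f) i' j' i
            (.graft (j - bb + 1) (by omega) (by omega) (by omega) (by omega) κ' z) τ' y)),
          Red.one (Step.theta (d := a + q - 1) i' (j - bb + 1) J κ'
            (.graft j' (by omega) (by omega) (by omega) (by omega) τ' y) z), ?_⟩
        simp only [ev]
        apply O.pentagon_two <;> omega
    | @theta a bb _ _ d' _ i' j' _ κ' τ' _ =>
      refine ⟨_, _, _,
        Red.step (Step.whiskerR i (Step.theta (d := a + q - 1) i' (j - bb + 1) j κ' τ' z) y)
        (Red.one (Step.theta (d := a + q - 1 + p - 1) i' j' i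
          (.graft (j - bb + 1) (by omega) (by omega) (by omega) (by omega) κ' z) τ' y)),
        Red.step (Step.theta (d := a + q - 1 + p - 1) i' (j - bb + 1 + p - 1) J
          (.graft j' (by omega) (by omega) (by omega) (by omega) κ' y) τ' z)
        (Red.one (Step.whiskerR i'
          (Step.theta (d := a + q - 1) j' (j - bb + 1) (j - bb + 1 + p - 1) κ' y z) τ')), ?_⟩
      simp only [ev]
      apply O.hexagon_two <;> omega

/-- Local confluence. -/
theorem local_confluence {n : ℕ} {t a b : FreeOb S n} (s₁ : Step S t a) (s₂ : Step S t b) :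
    Join (ev O S ρ s₁) (ev O S ρ s₂) := by
  induction s₁ with
  | beta => exact join_beta _ _ _ _ _ _ _ _ _ _ _ _ _ _ _ _ _ _ _ _ _
  | theta => exact join_theta _ _ _ _ _ _ _ _ _ _ _ _ _ _ _ _ _ _ _ _ _ _
  | whiskerL i t f hi1 hi2 hk h ih =>
    cases s₂ with
    | beta => exact (join_beta _ _ _ _ _ _ _ _ _ _ _ _ _ _ _ _ _ _ _ _ _).symm
    | theta => exact (join_theta _ _ _ _ _ _ _ _ _ _ _ _ _ _ _ _ _ _ _ _ _ _).symm
    | whiskerL _ _ g =>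
      obtain ⟨c, f', g', r, r', e⟩ := ih g
      refine ⟨_, _, _, Red.whiskerL i hi1 hi2 hk h t r, Red.whiskerL i hi1 hi2 hk h t r', ?_⟩
      refine (compMap_left i hi1 hi2 hk h _ _ _).trans (Eq.trans ?_
        (compMap_left i hi1 hi2 hk h _ _ _).symm)
      rw [e]
    | whiskerR _ g _ =>
      refine ⟨_, _, _, Red.one (Step.whiskerR i g _ hi1 hi2 hk h),
        Red.one (Step.whiskerL i _ f hi1 hi2 hk h), ?_⟩
      exact compMap_square i hi1 hi2 hk h (ev O S ρ g) (ev O S ρ f)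
  | whiskerR i f t hi1 hi2 hk h ih =>
    cases s₂ with
    | beta => exact (join_beta _ _ _ _ _ _ _ _ _ _ _ _ _ _ _ _ _ _ _ _ _).symm
    | theta => exact (join_theta _ _ _ _ _ _ _ _ _ _ _ _ _ _ _ _ _ _ _ _ _ _).symm
    | whiskerR _ g _ =>
      obtain ⟨c, f', g', r, r', e⟩ := ih g
      refine ⟨_, _, _, Red.whiskerR i hi1 hi2 hk h r t, Red.whiskerR i hi1 hi2 hk h r' t, ?_⟩
      refine (compMap_right i hi1 hi2 hk h _ _ _).trans (Eq.trans ?_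
        (compMap_right i hi1 hi2 hk h _ _ _).symm)
      rw [e]
    | whiskerL _ _ g =>
      refine ⟨_, _, _, Red.one (Step.whiskerL i _ g hi1 hi2 hk h),
        Red.one (Step.whiskerR i f _ hi1 hi2 hk h), ?_⟩
      exact (compMap_square i hi1 hi2 hk h (ev O S ρ f) (ev O S ρ g)).symm

/-- Number of graftings. -/
def gr : ∀ {n : ℕ}, FreeOb S n → ℕ
  | _, .of _ _ => 0
  | _, .graft _ _ _ _ _ x y => gr x + gr y + 1

/-- A measure decreased by `β` and preserved by `θ`. -/
def wt : ∀ {n : ℕ}, FreeOb S n → ℕ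
  | _, .of _ _ => 0
  | _, .graft _ _ _ _ _ x y => wt x + wt y + (gr y + 1) * (2 * gr x + 1)

/-- Length of the left spine. -/
def spine : ∀ {n : ℕ}, FreeOb S n → ℕ
  | _, .of _ _ => 0
  | _, .graft _ _ _ _ _ x _ => spine x + 1

/-- A measure decreased by `θ`. -/
def inv : ∀ {n : ℕ}, FreeOb S n → ℕ
  | _, .of _ _ => 0
  | _, .graft i _ _ _ _ x y => inv x + inv y + spine x * i

theorem step_decr {n : ℕ} {x y : FreeOb S n} (s : Step S x y) :
    gr y = gr x ∧ (wt y < wt x ∨ (wt y = wt x ∧ spine y = spine x ∧ inv y < inv x)) := by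
  induction s with
  | beta =>
    simp only [gr, wt]
    refine ⟨by omega, Or.inl ?_⟩
    nlinarith
  | theta i j J κ y z hij hi1 hi2 hj1 hj2 hp hq hC hD hJ =>
    simp only [gr, wt, spine, inv]
    refine ⟨by omega, Or.inr ⟨by ring, trivial, ?_⟩⟩
    have hJj : j ≤ J := by omega
    have := Nat.mul_le_mul_left (spine κ) hJj
    nlinarith
  | whiskerL i t f hi1 hi2 hk h ih =>
    obtain ⟨h1, h2⟩ := ih
    simp only [gr, wt, spine, inv, h1]
    refine ⟨trivial, ?_⟩
    rcases h2 with h2 | ⟨h2, h3, h4⟩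
    · left; omega
    · right; exact ⟨by omega, trivial, by omega⟩
  | whiskerR i f t hi1 hi2 hk h ih =>
    obtain ⟨h1, h2⟩ := ih
    simp only [gr, wt, spine, inv, h1]
    refine ⟨trivial, ?_⟩
    rcases h2 with h2 | ⟨h2, h3, h4⟩
    · left; omega
    · right; rw [h3]; exact ⟨by omega, rfl, by omega⟩

theorem step_wf (n : ℕ) : WellFounded (fun y x : FreeOb S n => Nonempty (Step S x y)) := by
  refine Subrelation.wf (r := InvImage (Prod.Lex (· < ·) (· < ·))
    (fun x : FreeOb S n => (wt x, inv x))) ?_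
    (InvImage.wf _ (WellFounded.prod_lex Nat.lt_wfRel.wf Nat.lt_wfRel.wf))
  rintro y x ⟨s⟩
  rcases (step_decr s).2 with h | ⟨h, -, hlt⟩
  · exact Prod.Lex.left _ _ h
  · show Prod.Lex _ _ (wt y, inv y) (wt x, inv x)
    rw [h]
    exact Prod.Lex.right _ hlt

/-- Normal forms. -/
def Nrm {n : ℕ} (x : FreeOb S n) : Prop := ∀ y, Step S x y → False

theorem exists_nf {n : ℕ} (x : FreeOb S n) :
    ∃ (z : FreeOb S n) (f : evalOb O S ρ x ⟶ evalOb O S ρ z), Nrm z ∧ Red O S ρ x z f := by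
  induction x using (step_wf n).induction with
  | _ x ih =>
    by_cases hx : Nrm x
    · exact ⟨x, _, hx, Red.refl x⟩
    · simp only [Nrm, not_forall] at hx
      obtain ⟨y, s, -⟩ := hx
      obtain ⟨z, f, hz, r⟩ := ih y ⟨s⟩
      exact ⟨z, _, hz, Red.step s r⟩

theorem nf_unique {n : ℕ} (x : FreeOb S n) : ∀ (z₁ z₂ : FreeOb S n)
    (f₁ : evalOb O S ρ x ⟶ evalOb O S ρ z₁) (f₂ : evalOb O S ρ x ⟶ evalOb O S ρ z₂),
    Nrm z₁ → Nrm z₂ → Red O S ρ x z₁ f₁ → Red O S ρ x z₂ f₂ →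
    ∃ h : z₁ = z₂, f₁ ≫ eqToHom (by rw [h]) = f₂ := by
  induction x using (step_wf n).induction with
  | _ x ih =>
    intro z₁ z₂ f₁ f₂ hz₁ hz₂ r₁ r₂
    cases r₁ with
    | refl =>
      cases r₂ with
      | refl => exact ⟨rfl, by simp⟩
      | step s _ => exact (hz₁ _ s).elim
    | @step _ a _ s₁ f₁ r₁ =>
      cases r₂ with
      | refl => exact (hz₂ _ s₁).elim
      | @step _ b _ s₂ f₂ r₂ =>
        obtain ⟨c, g₁, g₂, q₁, q₂, e⟩ := local_confluence (O := O) (ρ := ρ) s₁ s₂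
        obtain ⟨z, k, hz, q⟩ := exists_nf (O := O) (ρ := ρ) c
        obtain ⟨rfl, e₁⟩ := ih a ⟨s₁⟩ _ _ _ _ hz₁ hz r₁ (q₁.trans q)
        obtain ⟨rfl, e₂⟩ := ih b ⟨s₂⟩ _ _ _ _ hz₂ hz r₂ (q₂.trans q)
        refine ⟨rfl, ?_⟩
        simp only [eqToHom_refl, Category.comp_id] at e₁ e₂ ⊢
        rw [e₁, e₂, ← Category.assoc, ← Category.assoc, e]

theorem ev_isIso {n : ℕ} {x y : FreeOb S n} (s : Step S x y) :
    ∃ g, ev O S ρ s ≫ g = 𝟙 _ ∧ g ≫ ev O S ρ s = 𝟙 _ := by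
  induction s with
  | beta => simp only [ev]; exact ⟨_, Iso.hom_inv_id _, Iso.inv_hom_id _⟩
  | theta => simp only [ev]; exact ⟨_, Iso.hom_inv_id _, Iso.inv_hom_id _⟩
  | whiskerL i t f hi1 hi2 hk h ih =>
    obtain ⟨g, e, e'⟩ := ih
    refine ⟨O.compMap i hi1 hi2 hk h (𝟙 _) g, ?_, ?_⟩
    · exact compMap_left_id i hi1 hi2 hk h _ _ _ e
    · exact compMap_left_id i hi1 hi2 hk h _ _ _ e'
  | whiskerR i f t hi1 hi2 hk h ih =>
    obtain ⟨g, e, e'⟩ := ih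
    refine ⟨O.compMap i hi1 hi2 hk h g (𝟙 _), ?_, ?_⟩
    · exact compMap_right_id i hi1 hi2 hk h _ _ _ e
    · exact compMap_right_id i hi1 hi2 hk h _ _ _ e'

theorem red_isIso {n : ℕ} {x y : FreeOb S n} {f : evalOb O S ρ x ⟶ evalOb O S ρ y}
    (r : Red O S ρ x y f) : IsIso f := by
  induction r with
  | refl => infer_instance
  | step s r ih =>
    have : IsIso (ev O S ρ s) := ⟨ev_isIso s⟩
    infer_instance

/-- Every generating arrow is a forward step or inverse to one. -/
theorem hom_step {n : ℕ} {x y : FreeOb S n} (f : FreeHom S x y) :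
    (∃ s : Step S x y, evalHom O S ρ f = ev O S ρ s) ∨
    (∃ s : Step S y x, ev O S ρ s ≫ evalHom O S ρ f = 𝟙 _) := by
  induction f with
  | beta i j I hi1 hi2 hj1 hj2 hn hk hA hB hI hI1 hI2 hB1 h1 h2 κ μ ν =>
    exact Or.inl ⟨Step.beta i j I κ μ ν hi1 hi2 hj1 hj2 hn hk hA hB hI hI1 hI2 hB1 h1 h2, rfl⟩
  | betaInv i j I hi1 hi2 hj1 hj2 hn hk hA hB hI hI1 hI2 hB1 h1 h2 κ μ ν =>
    exact Or.inr ⟨Step.beta i j I κ μ ν hi1 hi2 hj1 hj2 hn hk hA hB hI hI1 hI2 hB1 h1 h2,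
      Iso.hom_inv_id _⟩
  | theta i j J hij hi1 hi2 hj1 hj2 hp hq hC hD hJ hJ1 hJ2 hid h1 h2 κ y z =>
    exact Or.inl ⟨Step.theta i j J κ y z hij hi1 hi2 hj1 hj2 hp hq hC hD hJ hJ1 hJ2 hid h1 h2, rfl⟩
  | thetaInv i j J hij hi1 hi2 hj1 hj2 hp hq hC hD hJ hJ1 hJ2 hid h1 h2 κ y z =>
    exact Or.inr ⟨Step.theta i j J κ y z hij hi1 hi2 hj1 hj2 hp hq hC hD hJ hJ1 hJ2 hid h1 h2,
      Iso.hom_inv_id _⟩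
  | whiskerL i hi1 hi2 hk h t f ih =>
    rcases ih with ⟨s, e⟩ | ⟨s, e⟩
    · refine Or.inl ⟨Step.whiskerL i t s hi1 hi2 hk h, ?_⟩
      simp only [ev, evalHom]
      rw [e]
    · refine Or.inr ⟨Step.whiskerL i t s hi1 hi2 hk h, ?_⟩
      exact compMap_left_id i hi1 hi2 hk h _ _ _ e
  | whiskerR i hi1 hi2 hk h f t ih =>
    rcases ih with ⟨s, e⟩ | ⟨s, e⟩
    · refine Or.inl ⟨Step.whiskerR i s t hi1 hi2 hk h, ?_⟩
      simp only [ev, evalHom]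
      rw [e]
    · refine Or.inr ⟨Step.whiskerR i s t hi1 hi2 hk h, ?_⟩
      exact compMap_right_id i hi1 hi2 hk h _ _ _ e

/-- Evaluated generators are compatible with reductions to normal form. -/
theorem hom_nf {n : ℕ} {x y z : FreeOb S n} (f : FreeHom S x y) (hz : Nrm z)
    {g : evalOb O S ρ y ⟶ evalOb O S ρ z} (r : Red O S ρ y z g) :
    Red O S ρ x z (evalHom O S ρ f ≫ g) := by
  rcases hom_step (O := O) (ρ := ρ) f with ⟨s, e⟩ | ⟨s, e⟩
  · rw [e]; exact Red.step s r
  · obtain ⟨w, k, hw, q⟩ := exists_nf (O := O) (ρ := ρ) x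
    obtain ⟨rfl, e'⟩ := nf_unique y _ _ _ _ hw hz (Red.step s q) r
    simp only [eqToHom_refl, Category.comp_id] at e'
    obtain ⟨i, hi, hi'⟩ := ev_isIso (O := O) (ρ := ρ) s
    have h1 : evalHom O S ρ f = i := by
      rw [← Category.id_comp (evalHom O S ρ f), ← hi', Category.assoc, e, Category.comp_id]
    rw [h1, ← e', ← Category.assoc, hi', Category.id_comp]
    exact q

theorem path_nf {n : ℕ} {x y z : FreeOb S n} (p : Quiver.Path x y) (hz : Nrm z)
    {g : evalOb O S ρ y ⟶ evalOb O S ρ z} (r : Red O S ρ y z g) :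
    Red O S ρ x z (((eval O S ρ n).map (X := x) (Y := y) p :
      evalOb O S ρ x ⟶ evalOb O S ρ y) ≫ g) := by
  induction p with
  | nil => 
    have : Red O S ρ x z (𝟙 _ ≫ g) := by rwa [Category.id_comp]
    exact this
  | cons p f ih =>
    have := ih (hom_nf f hz r)
    have e := Category.assoc (((eval O S ρ n).map p : evalOb O S ρ x ⟶ evalOb O S ρ _))
      (evalHom O S ρ f) g
    exact Red.congr this e.symm

variable (O S ρ)

/-- **Theorem 2.6 (coherence theorem for categorified non-symmetric operads).**
For any categorified non-symmetric operad `O`, any family of sets `S = {S n}_{n ≥ 1}`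
with evaluation functions `ρ n : S n → obj (O.P n)`, and any two parallel morphisms
`φ₁ φ₂ : t₁ ⟶ t₂` in the free (syntactic) categorified non-symmetric operad `𝒮` on `S`,
the evaluations of `φ₁` and `φ₂` in `O` coincide: `[φ₁] = [φ₂]`. -/
theorem coherence_categorified_ns_operad {n : ℕ} (t₁ t₂ : Paths (FreeOb S n))
    (φ₁ φ₂ : t₁ ⟶ t₂) :
    (eval O S ρ n).map φ₁ = (eval O S ρ n).map φ₂ := by
  obtain ⟨z, g, hz, r⟩ := exists_nf (O := O) (ρ := ρ) (n := n) t₂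
  obtain ⟨_, e⟩ := nf_unique (O := O) (ρ := ρ) (n := n) t₁ _ _ _ _ hz hz
    (path_nf φ₁ hz r) (path_nf φ₂ hz r)
  have := red_isIso r
  rw [eqToHom_refl, Category.comp_id] at e
  exact (cancel_mono g).1 e

end Stmt11
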